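/- arXiv:1111.5200 — 3 statements merged into one kernel-verified Lean document; each statement's English description precedes it below -/
import Mathlib

section
/- Let q > 1 and β ≥ 1, and let L be a finite set of links with a power assignment P such that L is q^{-α}-feasible. Then for any two distinct links u, v ∈ L, d_{uv} · d_{vu} ≥ q^2 · ℓ_u ℓ_v. -/
open Finset MeasureTheory
open scoped Classical

/-- A wireless link: an ordered sender–receiver pair of points in a metric space. -/
structure Link (X : Type*) where
  sender : X
  receiver : X

variable {X : Type*} [MetricSpace X]

/-- The length `ℓ_v` of a link. -/
noncomputable def linkLen (v : Link X) : ℝ := dist v.sender v.receiver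

/-- The asymmetric distance `d_{wv}` from the sender of `w` to the receiver of `v`. -/
noncomputable def linkDist (w v : Link X) : ℝ := dist w.sender v.receiver

/-- The constant `c_v = β/(1 - β N ℓ_v^α / P_v)`. -/
noncomputable def cConst (α β N : ℝ) (pw : Link X → ℝ) (v : Link X) : ℝ :=
  β / (1 - β * N * linkLen v ^ α / pw v)

/-- The (thresholded) affectance `a_w(v)` of link `w` on link `v`. -/
noncomputable def aff (α β N : ℝ) (pw : Link X → ℝ) (w v : Link X) : ℝ :=
  if w = v then 0
  else min 1 (cConst α β N pw v * (pw w / pw v) * (linkLen v / linkDist w v) ^ α)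

/-- `a_S(v) = Σ_{w ∈ S} a_w(v)`. -/
noncomputable def affIn (α β N : ℝ) (pw : Link X → ℝ) (S : Finset (Link X)) (v : Link X) : ℝ :=
  ∑ w ∈ S, aff α β N pw w v

/-- `a_v(S) = Σ_{w ∈ S} a_v(w)`. -/
noncomputable def affOut (α β N : ℝ) (pw : Link X → ℝ) (v : Link X) (S : Finset (Link X)) : ℝ :=
  ∑ w ∈ S, aff α β N pw v w

/-!
A summand of an affectance sum that is at most `γ < 1` is not truncated, so it bounds the power
ratio: `c_v (P_w / P_v) (ℓ_v / d_{wv}) ^ α ≤ γ`. Multiplying this bound for `u` acting on `v` with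
the one for `v` acting on `u` cancels the powers, and `β ≤ c_v` removes the noise.
-/

section Affectance

variable {α β N γ : ℝ} {pw : Link X → ℝ} {S : Finset (Link X)} {u v w : Link X}

theorem linkLen_nonneg : 0 ≤ linkLen v := dist_nonneg

theorem linkDist_nonneg : 0 ≤ linkDist w v := dist_nonneg

theorem pw_pos_of_noise_lt (hβ : 0 ≤ β) (hN : 0 ≤ N) (hnoise : β * N * linkLen v ^ α < pw v) :
    0 < pw v :=
  (mul_nonneg (mul_nonneg hβ hN) (Real.rpow_nonneg linkLen_nonneg α)).trans_lt hnoise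

theorem le_cConst (hβ : 0 ≤ β) (hN : 0 ≤ N) (hnoise : β * N * linkLen v ^ α < pw v) :
    β ≤ cConst α β N pw v := by
  have hpw : 0 < pw v := pw_pos_of_noise_lt hβ hN hnoise
  have hlen : 0 ≤ linkLen v ^ α := Real.rpow_nonneg linkLen_nonneg α
  have hratio_nonneg : 0 ≤ β * N * linkLen v ^ α / pw v := by positivity
  have hratio_lt_one : β * N * linkLen v ^ α / pw v < 1 := (div_lt_one hpw).2 hnoise
  exact le_div_self hβ (sub_pos.2 hratio_lt_one) (sub_le_self 1 hratio_nonneg)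

theorem aff_nonneg (hc : 0 ≤ cConst α β N pw v) (hw : 0 ≤ pw w) (hv : 0 ≤ pw v) :
    0 ≤ aff α β N pw w v := by
  have hratio : 0 ≤ (linkLen v / linkDist w v) ^ α :=
    Real.rpow_nonneg (div_nonneg linkLen_nonneg linkDist_nonneg) α
  unfold aff
  split_ifs
  · exact le_rfl
  · exact le_min zero_le_one (by positivity)

theorem aff_le_affIn (hc : 0 ≤ cConst α β N pw v) (hpw : ∀ x ∈ S, 0 ≤ pw x) (hv : 0 ≤ pw v)
    (hw : w ∈ S) : aff α β N pw w v ≤ affIn α β N pw S v :=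
  Finset.single_le_sum (f := (aff α β N pw · v)) (fun x hx => aff_nonneg hc (hpw x hx) hv) hw

theorem cConst_mul_rpow_linkLen_le_of_aff_le (hγ : γ < 1) (hwv : w ≠ v) (hv : 0 < pw v)
    (hd : 0 < linkDist w v) (haff : aff α β N pw w v ≤ γ) :
    cConst α β N pw v * (pw w * linkLen v ^ α) ≤ γ * (pw v * linkDist w v ^ α) := by
  have huntruncated :
      cConst α β N pw v * (pw w / pw v) * (linkLen v / linkDist w v) ^ α ≤ γ := by
    rw [aff, if_neg hwv, min_le_iff] at haff
    exact haff.resolve_left hγ.not_ge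
  rwa [Real.div_rpow linkLen_nonneg hd.le, mul_assoc, div_mul_div_comm, ← mul_div_assoc,
    div_le_iff₀ (by positivity)] at huntruncated

theorem cConst_mul_cConst_mul_rpow_le_of_aff_le (hγ : γ < 1) (huv : u ≠ v)
    (hcu : 0 ≤ cConst α β N pw u) (hu : 0 < pw u) (hv : 0 < pw v)
    (hduv : 0 < linkDist u v) (hdvu : 0 < linkDist v u)
    (haff_uv : aff α β N pw u v ≤ γ) (haff_vu : aff α β N pw v u ≤ γ) :
    cConst α β N pw u * cConst α β N pw v * (linkLen u * linkLen v) ^ α ≤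
      γ ^ 2 * (linkDist u v * linkDist v u) ^ α := by
  have hγ_nonneg : 0 ≤ γ := (aff_nonneg hcu hv.le hu.le).trans haff_vu
  have hlen (x : Link X) : 0 ≤ linkLen x ^ α := Real.rpow_nonneg linkLen_nonneg α
  rw [Real.mul_rpow linkLen_nonneg linkLen_nonneg, Real.mul_rpow hduv.le hdvu.le]
  refine le_of_mul_le_mul_left ?_ (mul_pos hu hv)
  calc pw u * pw v * (cConst α β N pw u * cConst α β N pw v * (linkLen u ^ α * linkLen v ^ α))
      = cConst α β N pw v * (pw u * linkLen v ^ α) *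
          (cConst α β N pw u * (pw v * linkLen u ^ α)) := by ring
    _ ≤ γ * (pw v * linkDist u v ^ α) * (γ * (pw u * linkDist v u ^ α)) :=
        mul_le_mul (cConst_mul_rpow_linkLen_le_of_aff_le hγ huv hv hduv haff_uv)
          (cConst_mul_rpow_linkLen_le_of_aff_le hγ huv.symm hu hdvu haff_vu)
          (mul_nonneg hcu (mul_nonneg hv.le (hlen u))) (by positivity)
    _ = pw u * pw v * (γ ^ 2 * (linkDist u v ^ α * linkDist v u ^ α)) := by ring

end Affectance

theorem rpow_two_div_mul_sq_mul_le {α b q x y : ℝ} (hα : 0 < α) (hb : 0 ≤ b) (hq : 0 < q)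
    (hx : 0 ≤ x) (hy : 0 ≤ y) (h : b ^ 2 * x ^ α ≤ (q ^ (-α)) ^ 2 * y ^ α) :
    b ^ (2 / α) * (q ^ 2 * x) ≤ y := by
  have hb_rpow : (b ^ (2 / α)) ^ α = b ^ 2 := by
    rw [← Real.rpow_mul hb, div_mul_cancel₀ _ hα.ne', Real.rpow_two]
  refine (Real.rpow_le_rpow_iff (by positivity) hy hα).1 ?_
  calc (b ^ (2 / α) * (q ^ 2 * x)) ^ α
      = (q ^ α) ^ 2 * (b ^ 2 * x ^ α) := by
        rw [Real.mul_rpow (by positivity) (by positivity), hb_rpow,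
          Real.mul_rpow (by positivity) hx, Real.rpow_pow_comm hq.le, mul_left_comm]
    _ ≤ (q ^ α) ^ 2 * ((q ^ (-α)) ^ 2 * y ^ α) := by gcongr
    _ = y ^ α := by
        rw [← mul_assoc, ← mul_pow, ← Real.rpow_add hq, add_neg_cancel, Real.rpow_zero, one_pow,
          one_mul]

theorem stmt_3_general {α β N q : ℝ} {pw : Link X → ℝ} {L : Finset (Link X)}
    (hα : 0 < α) (hq : 1 < q) (hβ : 0 ≤ β) (hN : 0 ≤ N)
    (hnoise : ∀ v ∈ L, β * N * linkLen v ^ α < pw v)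
    (hdd : ∀ v ∈ L, ∀ w ∈ L, w ≠ v → 0 < linkDist w v)
    (hfeas : ∀ v ∈ L, affIn α β N pw L v ≤ q ^ (-α))
    {u v : Link X} (hu : u ∈ L) (hv : v ∈ L) (huv : u ≠ v) :
    β ^ (2 / α) * (q ^ 2 * (linkLen u * linkLen v)) ≤ linkDist u v * linkDist v u := by
  have hpw (x) (hx : x ∈ L) : 0 < pw x := pw_pos_of_noise_lt hβ hN (hnoise x hx)
  have hc (x) (hx : x ∈ L) : β ≤ cConst α β N pw x := le_cConst hβ hN (hnoise x hx)
  have haff (w) (hw : w ∈ L) (x) (hx : x ∈ L) : aff α β N pw w x ≤ q ^ (-α) :=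
    (aff_le_affIn (hβ.trans (hc x hx)) (fun y hy => (hpw y hy).le) (hpw x hx).le hw).trans
      (hfeas x hx)
  have hthreshold : q ^ (-α) < 1 := Real.rpow_lt_one_of_one_lt_of_neg hq (neg_neg_of_pos hα)
  have hlen : 0 ≤ linkLen u * linkLen v := mul_nonneg linkLen_nonneg linkLen_nonneg
  refine rpow_two_div_mul_sq_mul_le hα hβ (zero_lt_one.trans hq) hlen
    (mul_nonneg linkDist_nonneg linkDist_nonneg) ?_
  calc β ^ 2 * (linkLen u * linkLen v) ^ α
      ≤ cConst α β N pw u * cConst α β N pw v * (linkLen u * linkLen v) ^ α := by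
        rw [sq]
        exact mul_le_mul_of_nonneg_right (mul_le_mul (hc u hu) (hc v hv) hβ (hβ.trans (hc u hu)))
          (Real.rpow_nonneg hlen α)
    _ ≤ (q ^ (-α)) ^ 2 * (linkDist u v * linkDist v u) ^ α :=
        cConst_mul_cConst_mul_rpow_le_of_aff_le hthreshold huv (hβ.trans (hc u hu)) (hpw u hu)
          (hpw v hv) (hdd v hv u hu huv) (hdd u hu v hv huv.symm) (haff u hu v hv) (haff v hv u hu)

/-- If `q > 1`, `β ≥ 1` and the finite set `L` of links is
`q^{-α}`-feasible under the power assignment `pw`, then any two distinct links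
`u, v ∈ L` satisfy `d_{uv} · d_{vu} ≥ q² ℓ_u ℓ_v`. -/
theorem stmt_3 {X : Type*} [MetricSpace X] (α β N q : ℝ) (pw : Link X → ℝ)
    (L : Finset (Link X))
    (hα : 0 < α) (hq : 1 < q) (hβ : 1 ≤ β) (hN : 0 ≤ N)
    (hlen : ∀ v ∈ L, 0 < linkLen v)
    (hpw : ∀ v ∈ L, 0 < pw v)
    (hnoise : ∀ v ∈ L, β * N * linkLen v ^ α < pw v)
    (hdd : ∀ v ∈ L, ∀ w ∈ L, w ≠ v → 0 < linkDist w v)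
    (hfeas : ∀ v ∈ L, affIn α β N pw L v ≤ q ^ (-α)) :
    ∀ u ∈ L, ∀ v ∈ L, u ≠ v →
      q ^ 2 * (linkLen u * linkLen v) ≤ linkDist u v * linkDist v u := by
  intro u hu v hv huv
  have hlen : 0 ≤ linkLen u * linkLen v := mul_nonneg linkLen_nonneg linkLen_nonneg
  exact (le_mul_of_one_le_left (by positivity) (Real.one_le_rpow hβ (by positivity))).trans
    (stmt_3_general hα hq (zero_le_one.trans hβ) hN hnoise hdd hfeas hu hv huv)
end

section
/- Let u, v, x be three pairwise distinct links equipped with a power assignment P that is non-decreasing and sub-linear on {u, v, x}. Suppose ℓ_u ≤ ℓ_v, suppose d_{xv} ≤ 3 · d_{xu}, and suppose c_v (P_x/P_v)(ℓ_v/d_{xv})^α ≤ 1 (so that a_x(v) equals this quantity). Then a_x(u) ≤ 3^α · a_x(v). -/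
open Finset MeasureTheory
open scoped Classical

variable {X : Type*} [MetricSpace X]

/-!
Let `S_v = P_v / ℓ_v^α` and `I_{wv} = P_w / d_{wv}^α` be the powers at which the receiver of `v`
hears its own sender and that of `w`. Before thresholding, the affectance of `w` on `v` is
`β I_{wv} / (S_v - β N)`. Sub-linearity gives `S_v ≤ S_u`, so the denominator can only grow from `v`
to `u`, while `d_{xv} ≤ K d_{xu}` bounds the growth of the numerator by `K^α`. This factor is at
least `1` when `1 ≤ K`, so the bound survives truncation at `1`.
-/

/-- The power at which the receiver of `v` hears the sender of `w`. The case `w = v` is the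
strength `P_v / ℓ_v^α` of the intended signal, since `linkDist v v` unfolds to `linkLen v`. -/
noncomputable def receivedPower (α : ℝ) (pw : Link X → ℝ) (w v : Link X) : ℝ :=
  pw w / linkDist w v ^ α

/-- The affectance of `w` on `v` before it is truncated at `1` and set to `0` on the diagonal. -/
noncomputable def unthresholdedAff (α β N : ℝ) (pw : Link X → ℝ) (w v : Link X) : ℝ :=
  cConst α β N pw v * (pw w / pw v) * (linkLen v / linkDist w v) ^ α

section Affectance

variable {α β N C K : ℝ} {pw : Link X → ℝ} {u v w : Link X}

lemma aff_of_ne (hwv : w ≠ v) : aff α β N pw w v = min 1 (unthresholdedAff α β N pw w v) :=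
  if_neg hwv

lemma receivedPower_nonneg (hpw : 0 ≤ pw w) : 0 ≤ receivedPower α pw w v :=
  div_nonneg hpw (Real.rpow_nonneg dist_nonneg α)

lemma unthresholdedAff_eq_div (hlen : 0 < linkLen v) (hpw : pw v ≠ 0) :
    unthresholdedAff α β N pw w v =
      β * receivedPower α pw w v / (receivedPower α pw v v - β * N) := by
  have hlen_rpow : linkLen v ^ α ≠ 0 := (Real.rpow_pos_of_pos hlen α).ne'
  have hmargin : receivedPower α pw v v - β * N =
      (1 - β * N * linkLen v ^ α / pw v) * (pw v / linkLen v ^ α) := by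
    change pw v / linkLen v ^ α - β * N = _
    field_simp
  have hdiv_rpow : (linkLen v / linkDist w v) ^ α = linkLen v ^ α / linkDist w v ^ α :=
    Real.div_rpow dist_nonneg dist_nonneg α
  rw [unthresholdedAff, cConst, hmargin, hdiv_rpow, receivedPower, ← div_div, div_div_eq_mul_div]
  ring

lemma receivedPower_le_rpow_mul (hα : 0 ≤ α) (hK : 0 ≤ K) (hpw : 0 ≤ pw w)
    (hwv : 0 < linkDist w v) (hdist : linkDist w v ≤ K * linkDist w u) :
    receivedPower α pw w u ≤ K ^ α * receivedPower α pw w v := by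
  have hprod : 0 < K * linkDist w u := hwv.trans_le hdist
  have hwu : 0 < linkDist w u := pos_of_mul_pos_right hprod hK
  have hK_rpow : K ^ α ≠ 0 := (Real.rpow_pos_of_pos (pos_of_mul_pos_left hprod hwu.le) α).ne'
  calc receivedPower α pw w u
      = K ^ α * (pw w / (K * linkDist w u) ^ α) := by
        rw [receivedPower, Real.mul_rpow hK hwu.le, ← mul_div_assoc, mul_div_mul_left _ _ hK_rpow]
    _ ≤ K ^ α * receivedPower α pw w v := by
        unfold receivedPower
        gcongr

lemma unthresholdedAff_le_mul (hβ : 0 ≤ β) (hlen_u : 0 < linkLen u) (hlen_v : 0 < linkLen v)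
    (hpw_u : pw u ≠ 0) (hpw_v : pw v ≠ 0) (hpw_w : 0 ≤ pw w)
    (hnoise : β * N < receivedPower α pw v v)
    (hsignal : receivedPower α pw v v ≤ receivedPower α pw u u)
    (hinterference : receivedPower α pw w u ≤ C * receivedPower α pw w v) :
    unthresholdedAff α β N pw w u ≤ C * unthresholdedAff α β N pw w v := by
  have hmargin : 0 < receivedPower α pw v v - β * N := sub_pos.mpr hnoise
  have hwu : 0 ≤ receivedPower α pw w u := receivedPower_nonneg hpw_w
  rw [unthresholdedAff_eq_div hlen_u hpw_u, unthresholdedAff_eq_div hlen_v hpw_v]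
  calc β * receivedPower α pw w u / (receivedPower α pw u u - β * N)
      ≤ β * receivedPower α pw w u / (receivedPower α pw v v - β * N) := by gcongr
    _ ≤ β * (C * receivedPower α pw w v) / (receivedPower α pw v v - β * N) := by gcongr
    _ = C * (β * receivedPower α pw w v / (receivedPower α pw v v - β * N)) := by ring

end Affectance

theorem stmt_5_general {α β N K : ℝ} {pw : Link X → ℝ} {u v x : Link X}
    (hα : 0 ≤ α) (hβ : 0 ≤ β) (hK : 1 ≤ K) (hux : u ≠ x) (hvx : v ≠ x)
    (hlen_u : 0 < linkLen u) (hlen_v : 0 < linkLen v)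
    (hpw_u : 0 < pw u) (hpw_v : 0 < pw v) (hpw_x : 0 ≤ pw x)
    (hnoise : β * N * linkLen v ^ α < pw v) (hxv : 0 < linkDist x v)
    (hsub : pw v / linkLen v ^ α ≤ pw u / linkLen u ^ α)
    (hdist : linkDist x v ≤ K * linkDist x u) :
    aff α β N pw x u ≤ K ^ α * aff α β N pw x v := by
  have hK_rpow : 1 ≤ K ^ α := Real.one_le_rpow hK hα
  have hnoise_signal : β * N < receivedPower α pw v v :=
    (lt_div_iff₀ (Real.rpow_pos_of_pos hlen_v α)).mpr hnoise
  have hinterference : receivedPower α pw x u ≤ K ^ α * receivedPower α pw x v :=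
    receivedPower_le_rpow_mul hα (zero_le_one.trans hK) hpw_x hxv hdist
  have hunthresholded : unthresholdedAff α β N pw x u ≤ K ^ α * unthresholdedAff α β N pw x v :=
    unthresholdedAff_le_mul hβ hlen_u hlen_v hpw_u.ne' hpw_v.ne' hpw_x hnoise_signal hsub
      hinterference
  rw [aff_of_ne hux.symm, aff_of_ne hvx.symm, mul_min_of_nonneg _ _ (zero_le_one.trans hK_rpow),
    mul_one]
  exact min_le_min hK_rpow hunthresholded

/-- Let `u, v, x` be pairwise distinct links with a non-decreasing,
sub-linear power assignment on `{u, v, x}`. If `ℓ_u ≤ ℓ_v`, `d_{xv} ≤ 3 d_{xu}` and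
`c_v (P_x/P_v)(ℓ_v/d_{xv})^α ≤ 1` (so `a_x(v)` equals this quantity), then
`a_x(u) ≤ 3^α · a_x(v)`. -/
theorem stmt_5 {X : Type*} [MetricSpace X] (α β N : ℝ) (pw : Link X → ℝ)
    (u v x : Link X)
    (hα : 0 < α) (hβ : 0 < β) (hN : 0 ≤ N)
    (huv : u ≠ v) (hux : u ≠ x) (hvx : v ≠ x)
    (hlen : ∀ y ∈ ({u, v, x} : Set (Link X)), 0 < linkLen y)
    (hpw : ∀ y ∈ ({u, v, x} : Set (Link X)), 0 < pw y)
    (hnoise : ∀ y ∈ ({u, v, x} : Set (Link X)), β * N * linkLen y ^ α < pw y)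
    (hdd : ∀ y ∈ ({u, v, x} : Set (Link X)), ∀ z ∈ ({u, v, x} : Set (Link X)),
      z ≠ y → 0 < linkDist z y)
    (hmono : ∀ a ∈ ({u, v, x} : Set (Link X)), ∀ b ∈ ({u, v, x} : Set (Link X)),
      linkLen b ≤ linkLen a → pw b ≤ pw a)
    (hsub : ∀ a ∈ ({u, v, x} : Set (Link X)), ∀ b ∈ ({u, v, x} : Set (Link X)),
      linkLen b ≤ linkLen a → pw a / linkLen a ^ α ≤ pw b / linkLen b ^ α)
    (hlu : linkLen u ≤ linkLen v)
    (hd3 : linkDist x v ≤ 3 * linkDist x u)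
    (hsmall : cConst α β N pw v * (pw x / pw v) * (linkLen v / linkDist x v) ^ α ≤ 1) :
    aff α β N pw x u ≤ 3 ^ α * aff α β N pw x v := by
  have hu : u ∈ ({u, v, x} : Set (Link X)) := by simp
  have hv : v ∈ ({u, v, x} : Set (Link X)) := by simp
  have hx : x ∈ ({u, v, x} : Set (Link X)) := by simp
  exact stmt_5_general hα.le hβ.le (by norm_num) hux hvx (hlen u hu) (hlen v hv) (hpw u hu)
    (hpw v hv) (hpw x hx).le (hnoise v hv) (hdd v hv x hx hvx.symm) (hsub v hv u hu hlu) hd3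
end

section
/- For all constants c₁ ≥ 1 and c₂ ≥ c₃ > 0 there exists a constant C > 0 depending only on α, c₁, c₂, c₃ with the following property. In the variable-QoS setting, let L be a finite set of links such that c₃ ≤ c_v ≤ c₂ for every v ∈ L and P_v ≤ c₁ P_w for all v, w ∈ L (nearly uniform power), and let OPT ⊆ L be feasible. Then there exist values δ_u ∈ [0,1] for u ∈ L such that Σ_{v∈L} a_u(v) δ_v ≤ C for every u ∈ L and Σ_{u∈L} δ_u ≥ |OPT|/2. -/
open Finset MeasureTheory
open scoped Classical

variable {X : Type*} [MetricSpace X]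

/-- In the variable-QoS setting, the constant `c_v = β_v/(1 - β_v N_v ℓ_v^α / P_v)`. -/
noncomputable def cConstQ (α : ℝ) (β N pw : Link X → ℝ) (v : Link X) : ℝ :=
  β v / (1 - β v * N v * linkLen v ^ α / pw v)

/-- The (thresholded) affectance `a_w(v)` of link `w` on link `v` (variable QoS). -/
noncomputable def affQ (α : ℝ) (β N pw : Link X → ℝ) (w v : Link X) : ℝ :=
  if w = v then 0
  else min 1 (cConstQ α β N pw v * (pw w / pw v) * (linkLen v / linkDist w v) ^ α)

/-- `a_S(v) = Σ_{w ∈ S} a_w(v)` (variable QoS). -/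
noncomputable def affInQ (α : ℝ) (β N pw : Link X → ℝ) (S : Finset (Link X)) (v : Link X) : ℝ :=
  ∑ w ∈ S, affQ α β N pw w v

/-- `a_v(S) = Σ_{w ∈ S} a_v(w)` (variable QoS). -/
noncomputable def affOutQ (α : ℝ) (β N pw : Link X → ℝ) (v : Link X) (S : Finset (Link X)) : ℝ :=
  ∑ w ∈ S, affQ α β N pw v w

/-!
Markov's inequality, applied to the row sums of the affectance matrix of a feasible set, shows that
at least half of the links of `OPT` form a `2`-anti-feasible set `A`; take `δ` to be its indicator.
Given `u ∈ L`, let `w ∈ A` be the link whose sender is closest to that of `u`. For every other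
`v ∈ A` the triangle inequality gives `d_{wv} ≤ ℓ_v + 2 d_{uv} ≤ 3 max(ℓ_v, d_{uv})`, so, powers
being nearly uniform and `c_v` bounded below, `a_u(v)` is at most a constant times `a_w(v)`. Hence
`a_u(A)` is at most a constant times `a_w(A) ≤ 2`, plus `1` for the link `w` itself.
-/

theorem min_one_mul_le_max_one_mul_min_one {R : Type*} [Semiring R] [LinearOrder R]
    [IsOrderedRing R] (a : R) {x : R} (hx : 0 ≤ x) :
    min 1 (a * x) ≤ max 1 a * min 1 x := by
  rw [mul_min_of_nonneg _ _ (zero_le_one.trans (le_max_left 1 a)), mul_one]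
  gcongr
  · exact le_max_left 1 a
  · exact le_max_right 1 a

theorem max_one_mul_div_le {b c p q r : ℝ} (hb : 0 < b) (hbc : b ≤ c) (hr : 0 < r)
    (hpq : p ≤ q) (hrq : r ≤ q) : max 1 (c * (p / r)) ≤ max 1 b⁻¹ * (c * (q / r)) := by
  have hc : 0 < c := hb.trans_le hbc
  have hq : 0 < q := hr.trans_le hrq
  refine max_le ?_ ?_
  · calc 1 ≤ b⁻¹ * c * (q / r) :=
          one_le_mul_of_one_le_of_one_le ((one_le_inv_mul₀ hb).mpr hbc) ((one_le_div hr).mpr hrq)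
      _ = b⁻¹ * (c * (q / r)) := mul_assoc _ _ _
      _ ≤ _ := by gcongr; exact le_max_right _ _
  · calc c * (p / r) ≤ c * (q / r) := by gcongr
      _ ≤ _ := le_mul_of_one_le_left (by positivity) (le_max_left _ _)

theorem card_filter_lt_sum_mul_le {ι κ : Type*} {S : Finset ι} {T : Finset κ} {a : ι → κ → ℝ}
    {γ t : ℝ} (ha : ∀ i ∈ S, ∀ j ∈ T, 0 ≤ a i j) (hcol : ∀ j ∈ T, ∑ i ∈ S, a i j ≤ γ) :
    (#{i ∈ S | t < ∑ j ∈ T, a i j} : ℝ) * t ≤ #T * γ :=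
  calc (#{i ∈ S | t < ∑ j ∈ T, a i j} : ℝ) * t
      ≤ ∑ i ∈ S with t < ∑ j ∈ T, a i j, ∑ j ∈ T, a i j := by
        rw [← nsmul_eq_mul]
        exact card_nsmul_le_sum _ _ _ fun i hi => (mem_filter.mp hi).2.le
    _ ≤ ∑ i ∈ S, ∑ j ∈ T, a i j :=
        sum_le_sum_of_subset_of_nonneg (filter_subset _ _) fun i hi _ => sum_nonneg (ha i hi)
    _ = ∑ j ∈ T, ∑ i ∈ S, a i j := sum_comm
    _ ≤ #T * γ := by
        rw [← nsmul_eq_mul]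
        exact sum_le_card_nsmul _ _ _ hcol

theorem linkDist_le_linkLen_add_two_mul {u v w : Link X}
    (hnear : dist w.sender u.sender ≤ dist v.sender u.sender) :
    linkDist w v ≤ linkLen v + 2 * linkDist u v := by
  unfold linkDist linkLen
  linarith [dist_triangle w.sender u.sender v.receiver,
    dist_triangle_right v.sender u.sender v.receiver]

theorem min_one_linkLen_div_linkDist_rpow_le {α : ℝ} (hα : 0 ≤ α) {u v w : Link X}
    (huv : 0 < linkDist u v) (hwv : 0 < linkDist w v)
    (hnear : dist w.sender u.sender ≤ dist v.sender u.sender) :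
    min 1 ((linkLen v / linkDist u v) ^ α) ≤ 3 ^ α * (linkLen v / linkDist w v) ^ α := by
  have hlen : 0 ≤ linkLen v := dist_nonneg
  have hdist := linkDist_le_linkLen_add_two_mul hnear
  rw [← Real.mul_rpow (by norm_num) (by positivity), ← mul_div_assoc]
  rcases le_total (linkLen v) (linkDist u v) with hle | hle
  · refine (min_le_right _ _).trans (Real.rpow_le_rpow (by positivity) ?_ hα)
    have hthree : linkDist w v ≤ 3 * linkDist u v := by linarith
    rw [div_le_div_iff₀ huv hwv, mul_comm 3, mul_assoc]
    gcongr
  · refine (min_le_left _ _).trans (Real.one_le_rpow ?_ hα)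
    rw [one_le_div hwv]
    linarith

/-- A set of links is `γ`-feasible if the total affectance it causes on each of its members is at
most `γ`. -/
def IsFeasible (α : ℝ) (β N pw : Link X → ℝ) (γ : ℝ) (S : Finset (Link X)) : Prop :=
  ∀ v ∈ S, affInQ α β N pw S v ≤ γ

/-- A set of links is `γ`-anti-feasible if the total affectance each of its members causes on it is
at most `γ`. -/
def IsAntiFeasible (α : ℝ) (β N pw : Link X → ℝ) (γ : ℝ) (S : Finset (Link X)) : Prop :=
  ∀ v ∈ S, affOutQ α β N pw v S ≤ γ

section Affectance

variable {α : ℝ} {β N pw : Link X → ℝ}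

theorem affQ_self (v : Link X) : affQ α β N pw v v = 0 :=
  if_pos rfl

theorem affQ_of_ne {w v : Link X} (h : w ≠ v) :
    affQ α β N pw w v =
      min 1 (cConstQ α β N pw v * (pw w / pw v) * (linkLen v / linkDist w v) ^ α) :=
  if_neg h

theorem affQ_le_one (w v : Link X) : affQ α β N pw w v ≤ 1 := by
  rcases eq_or_ne w v with rfl | hne
  · exact (affQ_self w).trans_le zero_le_one
  · exact (affQ_of_ne hne).trans_le (min_le_left _ _)

theorem affQ_nonneg {w v : Link X} (hc : 0 ≤ cConstQ α β N pw v) (hw : 0 ≤ pw w)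
    (hv : 0 ≤ pw v) : 0 ≤ affQ α β N pw w v := by
  rcases eq_or_ne w v with rfl | hne
  · exact (affQ_self w).ge
  · have hlen : 0 ≤ linkLen v := dist_nonneg
    have hdist : 0 ≤ linkDist w v := dist_nonneg
    rw [affQ_of_ne hne]
    positivity

theorem affQ_le_mul_affQ_of_dist_sender_le {c₁ c₃ : ℝ} (hα : 0 ≤ α) (hc₁ : 1 ≤ c₁) (hc₃ : 0 < c₃)
    {u v w : Link X} (hc : c₃ ≤ cConstQ α β N pw v) (hv : 0 < pw v)
    (huw : pw u ≤ c₁ * pw w) (hvw : pw v ≤ c₁ * pw w) (hne : w ≠ v)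
    (hdist_u : u ≠ v → 0 < linkDist u v) (hdist_w : 0 < linkDist w v)
    (hnear : dist w.sender u.sender ≤ dist v.sender u.sender) :
    affQ α β N pw u v ≤ c₁ * max 1 c₃⁻¹ * 3 ^ α * affQ α β N pw w v := by
  have hcv : 0 < cConstQ α β N pw v := hc₃.trans_le hc
  have hw : 0 < pw w := pos_of_mul_pos_right (hv.trans_le hvw) (zero_le_one.trans hc₁)
  rcases eq_or_ne u v with rfl | huv
  · have hnonneg : 0 ≤ affQ α β N pw w u := affQ_nonneg hcv.le hw.le hv.le
    rw [affQ_self]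
    positivity
  have hlen : 0 ≤ linkLen v := dist_nonneg
  have hdist : 0 < linkDist u v := hdist_u huv
  have hone : 1 ≤ c₁ * max 1 c₃⁻¹ * 3 ^ α :=
    one_le_mul_of_one_le_of_one_le (one_le_mul_of_one_le_of_one_le hc₁ (le_max_left _ _))
      (Real.one_le_rpow (by norm_num) hα)
  rw [affQ_of_ne hne, mul_min_of_nonneg _ _ (zero_le_one.trans hone), mul_one]
  refine le_min ((affQ_le_one u v).trans hone) ?_
  calc affQ α β N pw u v
      ≤ max 1 (cConstQ α β N pw v * (pw u / pw v)) *
          min 1 ((linkLen v / linkDist u v) ^ α) := by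
        rw [affQ_of_ne huv]
        exact min_one_mul_le_max_one_mul_min_one _ (by positivity)
    _ ≤ max 1 c₃⁻¹ * (cConstQ α β N pw v * (c₁ * pw w / pw v)) *
          (3 ^ α * (linkLen v / linkDist w v) ^ α) := by
        gcongr
        · exact max_one_mul_div_le hc₃ hc hv huw hvw
        · exact min_one_linkLen_div_linkDist_rpow_le hα hdist hdist_w hnear
    _ = _ := by ring

theorem affOutQ_mono {u : Link X} {S T : Finset (Link X)} (hST : S ⊆ T)
    (hnonneg : ∀ v ∈ T, 0 ≤ affQ α β N pw u v) :
    affOutQ α β N pw u S ≤ affOutQ α β N pw u T :=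
  sum_le_sum_of_subset_of_nonneg hST fun v hv _ => hnonneg v hv

theorem IsFeasible.exists_subset_isAntiFeasible {γ t : ℝ} {S : Finset (Link X)}
    (hS : IsFeasible α β N pw γ S) (ht : 0 < t)
    (hnonneg : ∀ v ∈ S, ∀ w ∈ S, 0 ≤ affQ α β N pw v w) :
    ∃ A ⊆ S, IsAntiFeasible α β N pw t A ∧ (1 - γ / t) * #S ≤ #A := by
  refine ⟨{v ∈ S | ¬ t < affOutQ α β N pw v S}, filter_subset _ _, fun v hv => ?_, ?_⟩
  · obtain ⟨hvS, hvt⟩ := mem_filter.mp hv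
    exact (affOutQ_mono (filter_subset _ _) (hnonneg v hvS)).trans (not_lt.mp hvt)
  · have hmarkov : (#{v ∈ S | t < affOutQ α β N pw v S} : ℝ) ≤ #S * γ / t :=
      (le_div_iff₀ ht).mpr (card_filter_lt_sum_mul_le hnonneg hS)
    have hsplit : (#{v ∈ S | t < affOutQ α β N pw v S} : ℝ) +
        #{v ∈ S | ¬ t < affOutQ α β N pw v S} = #S := by
      exact_mod_cast card_filter_add_card_filter_not _
    calc (1 - γ / t) * #S = #S - #S * γ / t := by ring
      _ ≤ _ := by linarith

theorem IsAntiFeasible.affOutQ_le {c₁ c₃ γ : ℝ} {A : Finset (Link X)}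
    (hA : IsAntiFeasible α β N pw γ A) (hα : 0 ≤ α) (hc₁ : 1 ≤ c₁) (hc₃ : 0 < c₃) (hγ : 0 ≤ γ)
    (hc : ∀ v ∈ A, c₃ ≤ cConstQ α β N pw v) (hpw : ∀ v ∈ A, 0 < pw v)
    (hunif : ∀ v ∈ A, ∀ w ∈ A, pw v ≤ c₁ * pw w)
    (hdist : ∀ v ∈ A, ∀ w ∈ A, w ≠ v → 0 < linkDist w v)
    {u : Link X} (hunif_u : ∀ w ∈ A, pw u ≤ c₁ * pw w)
    (hdist_u : ∀ v ∈ A, u ≠ v → 0 < linkDist u v) :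
    affOutQ α β N pw u A ≤ 1 + c₁ * max 1 c₃⁻¹ * 3 ^ α * γ := by
  rcases A.eq_empty_or_nonempty with rfl | hne
  · rw [affOutQ, sum_empty]
    positivity
  obtain ⟨w, hw, hnearest⟩ := A.exists_min_image (fun v => dist v.sender u.sender) hne
  have hnonneg : ∀ v ∈ A, 0 ≤ affQ α β N pw w v := fun v hv =>
    affQ_nonneg (hc₃.le.trans (hc v hv)) (hpw w hw).le (hpw v hv).le
  calc affOutQ α β N pw u A
      = affQ α β N pw u w + affOutQ α β N pw u (A.erase w) := (add_sum_erase A _ hw).symm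
    _ ≤ 1 + c₁ * max 1 c₃⁻¹ * 3 ^ α * affOutQ α β N pw w (A.erase w) := by
        refine add_le_add (affQ_le_one u w) ?_
        rw [affOutQ, affOutQ, mul_sum]
        refine sum_le_sum fun v hv => ?_
        obtain ⟨hvw, hvA⟩ := mem_erase.mp hv
        exact affQ_le_mul_affQ_of_dist_sender_le hα hc₁ hc₃ (hc v hvA) (hpw v hvA) (hunif_u w hw)
          (hunif v hvA w hw) hvw.symm (hdist_u v hvA) (hdist v hvA w hw hvw.symm) (hnearest v hvA)
    _ ≤ 1 + c₁ * max 1 c₃⁻¹ * 3 ^ α * γ := by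
        gcongr
        exact (affOutQ_mono (erase_subset w A) hnonneg).trans (hA w hw)

end Affectance

theorem stmt_15_general (α : ℝ) (hα : 0 ≤ α) (c₁ c₃ : ℝ) (hc₁ : 1 ≤ c₁) (hc₃ : 0 < c₃) :
    ∃ C : ℝ, 0 < C ∧
      ∀ (X : Type*) [MetricSpace X] (β N pw : Link X → ℝ) (L OPT : Finset (Link X)),
        (∀ v ∈ L, 0 < pw v) →
        (∀ v ∈ L, ∀ w ∈ L, w ≠ v → 0 < linkDist w v) →
        (∀ v ∈ L, c₃ ≤ cConstQ α β N pw v) →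
        (∀ v ∈ L, ∀ w ∈ L, pw v ≤ c₁ * pw w) →
        OPT ⊆ L →
        IsFeasible α β N pw 1 OPT →
        ∃ δ : Link X → ℝ,
          (∀ u ∈ L, 0 ≤ δ u ∧ δ u ≤ 1) ∧
          (∀ u ∈ L, (∑ v ∈ L, affQ α β N pw u v * δ v) ≤ C) ∧
          (OPT.card : ℝ) / 2 ≤ ∑ u ∈ L, δ u := by
  refine ⟨1 + c₁ * max 1 c₃⁻¹ * 3 ^ α * 2, by positivity, ?_⟩
  intro X _ β N pw L OPT hpw hdist hc hunif hOPT hfeas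
  obtain ⟨A, hAOPT, hanti, hcard⟩ := hfeas.exists_subset_isAntiFeasible two_pos fun v hv w hw =>
    affQ_nonneg (hc₃.le.trans (hc w (hOPT hw))) (hpw v (hOPT hv)).le (hpw w (hOPT hw)).le
  have hAL : A ⊆ L := hAOPT.trans hOPT
  have hinter : L ∩ A = A := inter_eq_right.mpr hAL
  refine ⟨fun v => if v ∈ A then 1 else 0, fun u _ => ?_, fun u hu => ?_, ?_⟩
  · dsimp only
    split_ifs <;> norm_num
  · simp only [mul_ite, mul_one, mul_zero, sum_ite_mem, hinter]
    exact hanti.affOutQ_le hα hc₁ hc₃ zero_le_two (fun v hv => hc v (hAL hv))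
      (fun v hv => hpw v (hAL hv)) (fun v hv w hw => hunif v (hAL hv) w (hAL hw))
      (fun v hv w hw => hdist v (hAL hv) w (hAL hw)) (fun w hw => hunif u hu w (hAL hw))
      (fun v hv => hdist v (hAL hv) u hu)
  · simp only [sum_ite_mem, hinter, sum_const, nsmul_eq_mul, mul_one]
    linarith

/-- For all `c₁ ≥ 1` and `c₂ ≥ c₃ > 0` there is `C > 0` depending only
on `α, c₁, c₂, c₃` such that, in the variable-QoS setting with `c₃ ≤ c_v ≤ c₂` on `L` and
nearly uniform power (`P_v ≤ c₁ P_w` on `L`), for every feasible `OPT ⊆ L` there exist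
`δ_u ∈ [0,1]` with `Σ_{v∈L} a_u(v) δ_v ≤ C` for every `u ∈ L` and
`Σ_{u∈L} δ_u ≥ |OPT|/2`. -/
theorem stmt_15 (α : ℝ) (hα : 0 < α) (c₁ c₂ c₃ : ℝ)
    (hc₁ : 1 ≤ c₁) (hc₃ : 0 < c₃) (hc₂ : c₃ ≤ c₂) :
    ∃ C : ℝ, 0 < C ∧
      ∀ (X : Type*) [MetricSpace X] (β N pw : Link X → ℝ)
        (L OPT : Finset (Link X)),
        (∀ v ∈ L, 0 < β v) →
        (∀ v ∈ L, 0 ≤ N v) →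
        (∀ v ∈ L, 0 < linkLen v) →
        (∀ v ∈ L, 0 < pw v) →
        (∀ v ∈ L, β v * N v * linkLen v ^ α < pw v) →
        (∀ v ∈ L, ∀ w ∈ L, w ≠ v → 0 < linkDist w v) →
        (∀ v ∈ L, c₃ ≤ cConstQ α β N pw v ∧ cConstQ α β N pw v ≤ c₂) →
        (∀ v ∈ L, ∀ w ∈ L, pw v ≤ c₁ * pw w) →
        OPT ⊆ L →
        (∀ v ∈ OPT, affInQ α β N pw OPT v ≤ 1) →
        ∃ δ : Link X → ℝ,
          (∀ u ∈ L, 0 ≤ δ u ∧ δ u ≤ 1) ∧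
          (∀ u ∈ L, (∑ v ∈ L, affQ α β N pw u v * δ v) ≤ C) ∧
          (OPT.card : ℝ) / 2 ≤ ∑ u ∈ L, δ u := by
  obtain ⟨C, hC, h⟩ := stmt_15_general α hα.le c₁ c₃ hc₁ hc₃
  exact ⟨C, hC, fun X _ β N pw L OPT _ _ _ hpw _ hdist hc hunif =>
    h X β N pw L OPT hpw hdist (fun v hv => (hc v hv).1) hunif⟩
end
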